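/- arXiv:1605.00912 — 2 statements merged into one kernel-verified Lean document; each statement's English description precedes it below -/
import Mathlib

section
/- For an s-rectifiable random vector x ∈ ℝ^m and any n > s, for Lebesgue almost all A ∈ ℝ^{n×m} there exists a Borel measurable decoder g_A : ℝ^n → ℝ^m with P[g_A(Ax) ≠ x] = 0. -/
open MeasureTheory Filter Set Metric Bornology Matrix Pointwise
noncomputable def matVec {n m : ℕ} (A : Fin n → Fin m → ℝ) (x : EuclideanSpace ℝ (Fin m)) :
    EuclideanSpace ℝ (Fin n) :=
  (EuclideanSpace.equiv (Fin n) ℝ).symm (Matrix.mulVec (Matrix.of A) (EuclideanSpace.equiv (Fin m) ℝ x))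
def IsRectifiableSet (s m : ℕ) (U : Set (EuclideanSpace ℝ (Fin m))) : Prop :=
  MeasurableSet U ∧
  ∃ (A : ℕ → Set (EuclideanSpace ℝ (Fin s)))
    (φ : ℕ → EuclideanSpace ℝ (Fin s) → EuclideanSpace ℝ (Fin m)),
    (∀ i, (A i).Nonempty ∧ IsBounded (A i) ∧ MeasurableSet (A i) ∧
      ∃ K : NNReal, LipschitzOnWith K (φ i) (A i)) ∧
    μH[(s : ℝ)] (U \ ⋃ i, φ i '' A i) = 0

def IsRectifiableRV (s m : ℕ) {Ω : Type*} [MeasureSpace Ω] (x : Ω → EuclideanSpace ℝ (Fin m)) : Prop :=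
  Measurable x ∧ ∃ U : Set (EuclideanSpace ℝ (Fin m)), IsRectifiableSet s m U ∧
    volume (x ⁻¹' U) = 1 ∧ Measure.map x volume ≪ μH[(s : ℝ)]

lemma matVec_apply {n m : ℕ} (A : Fin n → Fin m → ℝ) (x : EuclideanSpace ℝ (Fin m)) (i : Fin n) :
    matVec A x i = ∑ j, A i j * x j := rfl

lemma matVec_sub {n m : ℕ} (A : Fin n → Fin m → ℝ) (x y : EuclideanSpace ℝ (Fin m)) :
    matVec A (x - y) = matVec A x - matVec A y := by
  ext i
  simp [matVec_apply, mul_sub]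

lemma continuous_matVec {n m : ℕ} :
    Continuous fun p : EuclideanSpace ℝ (Fin m) × (Fin n → Fin m → ℝ) => matVec p.2 p.1 := by
  refine (EuclideanSpace.equiv (Fin n) ℝ).symm.continuous.comp (continuous_pi fun i => ?_)
  change Continuous fun p : EuclideanSpace ℝ (Fin m) × (Fin n → Fin m → ℝ) => ∑ j, p.2 i j * p.1 j
  fun_prop

/-- The matrix with `u` in its kernel whose columns other than the `j`-th are prescribed
(for `u j ≠ 0`). -/
noncomputable def solveColumn {n m : ℕ} (j : Fin m)
    (p : (Fin n → {l : Fin m // l ≠ j} → ℝ) × EuclideanSpace ℝ (Fin m)) : Fin n → Fin m → ℝ :=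
  fun i l => if h : l = j then -(∑ k : {l : Fin m // l ≠ j}, p.1 i k * p.2 k) / p.2 j
    else p.1 i ⟨l, h⟩

lemma contDiffAt_solveColumn {n m : ℕ} (j : Fin m)
    (p : (Fin n → {l : Fin m // l ≠ j} → ℝ) × EuclideanSpace ℝ (Fin m)) (hp : p.2 j ≠ 0) :
    ContDiffAt ℝ 1 (solveColumn j) p := by
  refine contDiffAt_pi.2 fun i => contDiffAt_pi.2 fun l => ?_
  by_cases h : l = j
  · simp only [solveColumn, h, dite_true]
    refine ContDiffAt.div ?_ (by fun_prop) hp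
    fun_prop
  · simp only [solveColumn, h, dite_false]
    fun_prop

lemma eq_solveColumn_of_matVec_eq_zero {n m : ℕ} (j : Fin m) (A : Fin n → Fin m → ℝ)
    (u : EuclideanSpace ℝ (Fin m)) (hu : u j ≠ 0) (hA : matVec A u = 0) :
    solveColumn j (fun i l => A i l, u) = A := by
  funext i l
  by_cases h : l = j
  · subst h
    have h0 : ∑ k, A i k * u k = 0 := by
      rw [← matVec_apply, hA]; rfl
    rw [← Finset.add_sum_erase _ _ (Finset.mem_univ l),
      Finset.sum_subtype (p := fun k => k ≠ l) (Finset.univ.erase l) (by simp)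
        (fun k => A i k * u k)] at h0
    simp only [solveColumn, dite_true]
    rw [div_eq_iff hu]
    linarith
  · simp [solveColumn, h]

lemma volume_eq_zero_of_dimH_lt_finrank {E : Type*} [NormedAddCommGroup E] [NormedSpace ℝ E]
    [FiniteDimensional ℝ E] [MeasurableSpace E] [BorelSpace E] (μ : Measure E)
    [μ.IsAddHaarMeasure] {S : Set E} (hS : dimH S < Module.finrank ℝ E) : μ S = 0 := by
  refine Measure.absolutelyContinuous_isAddHaarMeasure μ μH[Module.finrank ℝ E] ?_
  exact_mod_cast hausdorffMeasure_of_dimH_lt (d := (Module.finrank ℝ E : NNReal)) (by simpa using hS)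

/-- Almost every matrix with more than `s` rows has no nonzero kernel vector in a given
`s`-dimensional Lipschitz image. -/
lemma volume_setOf_exists_matVec_eq_zero {s m n : ℕ} (hn : s < n)
    {f : EuclideanSpace ℝ (Fin s) → EuclideanSpace ℝ (Fin m)} {K : NNReal}
    (hf : LipschitzWith K f) :
    volume {A : Fin n → Fin m → ℝ | ∃ t, f t ≠ 0 ∧ matVec A (f t) = 0} = 0 := by
  let S : Fin m → Set (Fin n → Fin m → ℝ) := fun j =>
    solveColumn j '' (range (Prod.map id f) ∩ {p | p.2 j ≠ 0})
  have hsub : {A : Fin n → Fin m → ℝ | ∃ t, f t ≠ 0 ∧ matVec A (f t) = 0} ⊆ ⋃ j, S j := by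
    rintro A ⟨t, ht, hA⟩
    obtain ⟨j, hj⟩ : ∃ j, f t j ≠ 0 := by
      by_contra! h
      exact ht (by ext j; exact h j)
    exact mem_iUnion.2 ⟨j, _, ⟨⟨(fun i l => A i l, t), rfl⟩, hj⟩,
      eq_solveColumn_of_matVec_eq_zero j A (f t) hj hA⟩
  refine measure_mono_null hsub (measure_iUnion_null fun j => ?_)
  refine volume_eq_zero_of_dimH_lt_finrank _ ?_
  calc dimH (S j)
      ≤ dimH (range (Prod.map (id : (Fin n → {l : Fin m // l ≠ j} → ℝ) → _) f)
          ∩ {p | p.2 j ≠ 0}) := by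
        refine dimH_image_le_of_locally_lipschitzOn fun p hp => ?_
        obtain ⟨C, u, hu, hC⟩ := (contDiffAt_solveColumn j p hp.2).exists_lipschitzOnWith
        exact ⟨C, u, mem_nhdsWithin_of_mem_nhds hu, hC⟩
    _ ≤ dimH (range (Prod.map (id : (Fin n → {l : Fin m // l ≠ j} → ℝ) → _) f)) :=
        dimH_mono inter_subset_left
    _ ≤ dimH (univ : Set ((Fin n → {l : Fin m // l ≠ j} → ℝ) × EuclideanSpace ℝ (Fin s))) :=
        ((LipschitzWith.id.comp LipschitzWith.prod_fst).prodMk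
          (hf.comp LipschitzWith.prod_snd)).dimH_range_le
    _ < Module.finrank ℝ (Fin n → Fin m → ℝ) := by
        rw [Real.dimH_univ_eq_finrank]
        have hm : 0 < m := j.pos
        obtain ⟨k, rfl⟩ : ∃ k, m = k + 1 := ⟨m - 1, by omega⟩
        simp only [Module.finrank_prod, Module.finrank_pi_fintype, Module.finrank_self,
          finrank_euclideanSpace, Finset.sum_const, Finset.card_univ, Fintype.card_fin,
          Fintype.card_subtype_compl, Fintype.card_subtype_eq, smul_eq_mul, mul_one, ne_eq]
        norm_cast
        simp only [Nat.add_sub_cancel]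
        nlinarith

lemma IsSigmaCompact.measurableSet {X : Type*} [TopologicalSpace X] [T2Space X]
    [MeasurableSpace X] [OpensMeasurableSpace X] {S : Set X} (hS : IsSigmaCompact S) :
    MeasurableSet S := by
  obtain ⟨K, hK, rfl⟩ := hS
  exact MeasurableSet.iUnion fun i => (hK i).measurableSet

lemma measurableSet_setOf_exists_collision {T E P Y : Type*} [TopologicalSpace T]
    [SigmaCompactSpace T] [MetricSpace E] [SigmaCompactSpace E] [TopologicalSpace P]
    [SigmaCompactSpace P] [T2Space P] [TopologicalSpace Y] [T2Space Y]
    [MeasurableSpace (E × P)] [OpensMeasurableSpace (E × P)] {f : T → E} (hf : Continuous f)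
    {F : E × P → Y} (hF : Continuous F) :
    MeasurableSet {p : E × P | ∃ t, f t ≠ p.1 ∧ F p = F (f t, p.2)} := by
  have h : {p : E × P | ∃ t, f t ≠ p.1 ∧ F p = F (f t, p.2)} =
      ⋃ k : ℕ, Prod.fst '' {q : (E × P) × T |
        1 / ((k : ℝ) + 1) ≤ dist (f q.2) q.1.1 ∧ F q.1 = F (f q.2, q.1.2)} := by
    ext p
    simp only [mem_ofPred_eq, mem_iUnion, mem_image]
    constructor
    · rintro ⟨t, ht, he⟩
      obtain ⟨k, hk⟩ := exists_nat_one_div_lt (dist_pos.2 ht)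
      exact ⟨k, (p, t), ⟨hk.le, he⟩, rfl⟩
    · rintro ⟨k, ⟨p, t⟩, ⟨hk, he⟩, rfl⟩
      exact ⟨t, dist_pos.1 (lt_of_lt_of_le (by positivity) hk), he⟩
  rw [h]
  refine MeasurableSet.iUnion fun k => IsSigmaCompact.measurableSet ?_
  refine IsSigmaCompact.image continuous_fst (isSigmaCompact_univ.of_isClosed_subset ?_
    (subset_univ _))
  refine IsClosed.and ?_ ?_
  · exact isClosed_le continuous_const (by fun_prop)
  · exact isClosed_eq (by fun_prop) (by fun_prop)

lemma exists_measurable_leftInvOn {X Y : Type*} [MeasurableSpace X] [StandardBorelSpace X]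
    [Nonempty X] [MeasurableSpace Y] [MeasurableSpace.CountablySeparated Y] {F : X → Y}
    (hF : Measurable F) {G : Set X} (hG : MeasurableSet G) (hinj : InjOn F G) :
    ∃ g : Y → X, Measurable g ∧ LeftInvOn g F G := by
  have hemb : MeasurableEmbedding (G.domRestrict F) :=
    { injective := injOn_iff_injective.1 hinj
      measurable := hF.comp measurable_subtype_coe
      measurableSet_image' := fun S hS => by
        have := (hG.subtype_image hS).image_of_measurable_injOn hF
          (hinj.mono (Subtype.coe_image_subset G S))
        rwa [image_image] at this }
  obtain ⟨g, hg, hgF⟩ := hemb.exists_measurable_extend measurable_subtype_coe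
    fun _ => inferInstance
  exact ⟨g, hg, fun a ha => congrFun hgF ⟨a, ha⟩⟩

/-- A rectifiable random vector lies almost surely in a countable union of images of globally
defined Lipschitz maps. -/
lemma IsRectifiableRV.exists_lipschitz_ae_mem {s m : ℕ} {Ω : Type*} [MeasureSpace Ω]
    [IsProbabilityMeasure (volume : Measure Ω)] {x : Ω → EuclideanSpace ℝ (Fin m)}
    (h : IsRectifiableRV s m x) :
    ∃ f : ℕ → EuclideanSpace ℝ (Fin s) → EuclideanSpace ℝ (Fin m),
      (∀ i, ∃ K : NNReal, LipschitzWith K (f i)) ∧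
      ∀ᵐ a ∂(Measure.map x volume), a ∈ ⋃ i, range (f i) := by
  obtain ⟨hx, U, ⟨hU, A, φ, hφ, hnull⟩, hU1, hac⟩ := h
  have hext : ∀ i, ∃ g : EuclideanSpace ℝ (Fin s) → EuclideanSpace ℝ (Fin m),
      (∃ K : NNReal, LipschitzWith K g) ∧ EqOn (φ i) g (A i) := fun i => by
    obtain ⟨-, -, -, K, hK⟩ := hφ i
    obtain ⟨g, hg, hgφ⟩ := hK.extend_finite_dimension
    exact ⟨g, ⟨_, hg⟩, hgφ⟩
  choose f hf hfφ using hext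
  refine ⟨f, hf, ?_⟩
  have hmemU : ∀ᵐ a ∂(Measure.map x volume), a ∈ U := by
    have := (mem_ae_iff_prob_eq_one (hx hU)).2 hU1
    exact (ae_map_iff hx.aemeasurable (p := (· ∈ U)) hU).2 this
  have hnot : ∀ᵐ a ∂(Measure.map x volume), a ∉ U \ ⋃ i, φ i '' A i :=
    measure_eq_zero_iff_ae_notMem.1 (hac hnull)
  filter_upwards [hmemU, hnot] with a haU ha
  have : a ∈ ⋃ i, φ i '' A i := by
    by_contra h'
    exact ha ⟨haU, h'⟩
  obtain ⟨i, t, ht, rfl⟩ := mem_iUnion.1 this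
  exact mem_iUnion.2 ⟨i, t, (hfφ i ht).symm⟩

theorem achievability_rectifiable {s m n : ℕ} {Ω : Type*} [MeasureSpace Ω]
    [IsProbabilityMeasure (volume : Measure Ω)]
    (x : Ω → EuclideanSpace ℝ (Fin m)) (h : IsRectifiableRV s m x) (hn : s < n) :
    ∀ᵐ A : Fin n → Fin m → ℝ,
      ∃ g : EuclideanSpace ℝ (Fin n) → EuclideanSpace ℝ (Fin m), Measurable g ∧
        volume {ω : Ω | g (matVec A (x ω)) ≠ x ω} = 0 := by
  obtain ⟨f, hf, hmem⟩ := h.exists_lipschitz_ae_mem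
  have hx : Measurable x := h.1
  choose K hK using hf
  let Collides : EuclideanSpace ℝ (Fin m) → (Fin n → Fin m → ℝ) → Prop := fun a A =>
    ∃ i t, f i t ≠ a ∧ matVec A a = matVec A (f i t)
  have hmeas : MeasurableSet
      {p : EuclideanSpace ℝ (Fin m) × (Fin n → Fin m → ℝ) | ¬ Collides p.1 p.2} := by
    have hcoll : MeasurableSet
        {p : EuclideanSpace ℝ (Fin m) × (Fin n → Fin m → ℝ) | Collides p.1 p.2} := by
      simp only [Collides]
      rw [ofPred_exists]
      exact MeasurableSet.iUnion fun i =>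
        measurableSet_setOf_exists_collision (hK i).continuous continuous_matVec
    exact hcoll.compl
  have hnull : ∀ a, ∀ᵐ A, ¬ Collides a A := fun a => by
    simp only [Collides, not_exists (p := fun i => ∃ t, f i t ≠ a ∧ _), ae_all_iff]
    intro i
    have hlip : LipschitzWith (K i + 0) fun t => f i t - a := (hK i).sub (LipschitzWith.const a)
    have := measure_eq_zero_iff_ae_notMem.1
      (volume_setOf_exists_matVec_eq_zero (n := n) hn hlip)
    filter_upwards [this] with A hA
    rintro ⟨t, ht, he⟩
    exact hA ⟨t, sub_ne_zero.2 ht, by rw [matVec_sub, he, sub_self]⟩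
  have hae : ∀ᵐ A, ∀ᵐ a ∂(Measure.map x volume), ¬ Collides a A := by
    have := Measure.isProbabilityMeasure_map (μ := volume) hx.aemeasurable
    exact (Measure.ae_ae_comm hmeas).1 (ae_of_all _ hnull)
  filter_upwards [hae] with A hA
  have hV : MeasurableSet (⋃ i, range (f i)) := MeasurableSet.iUnion fun i =>
    (isSigmaCompact_range (hK i).continuous).measurableSet
  have hG : MeasurableSet ((⋃ i, range (f i)) ∩ {a | ¬ Collides a A}) :=
    hV.inter (measurable_prodMk_right hmeas)
  have hinj : InjOn (matVec A) ((⋃ i, range (f i)) ∩ {a | ¬ Collides a A}) := by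
    rintro a ⟨-, ha⟩ b ⟨hb, -⟩ hab
    obtain ⟨i, t, rfl⟩ := mem_iUnion.1 hb
    by_contra hne
    exact ha ⟨i, t, Ne.symm hne, hab⟩
  have hA_meas : Measurable (matVec A) :=
    (continuous_matVec.comp (Continuous.prodMk_left A)).measurable
  obtain ⟨g, hg, hgA⟩ := exists_measurable_leftInvOn hA_meas hG hinj
  refine ⟨g, hg, ?_⟩
  have hgood : ∀ᵐ ω, x ω ∈ (⋃ i, range (f i)) ∩ {a | ¬ Collides a A} :=
    ae_of_ae_map hx.aemeasurable (hmem.and hA)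
  refine measure_mono_null ?_ (ae_iff.1 hgood)
  exact fun ω hω hmemG => hω (hgA hmemG)
end

section
/- There exist a C^1 function κ : ℝ^2 → ℝ and a bounded Borel set A ⊆ ℝ^2 with 0 < Lebesgue measure of A < ∞ such that κ is injective on A. -/
open MeasureTheory Filter Set Metric Bornology Matrix Pointwise

/-- A series of smooth steps: the `n`-th step has height `10⁻ⁿ` and rises from `q n` to
`q n + 2⁻ⁿ / 4`. -/
noncomputable def stepSeries (q : ℕ → ℝ) (x : ℝ) : ℝ :=
  ∑' n, (1 / 10 : ℝ) ^ n * Real.smoothTransition (4 * 2 ^ n * (x - q n))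

/-- The points of the unit interval which lie on no rising part of the steps of `stepSeries q`. -/
def flatSet (q : ℕ → ℝ) : Set ℝ :=
  Icc 0 1 \ ⋃ n, Ioo (q n) (q n + (1 / 2) ^ n / 4)

lemma exists_abs_deriv_smoothTransition_le :
    ∃ M, ∀ x, |deriv Real.smoothTransition x| ≤ M := by
  have hc : Continuous (deriv Real.smoothTransition) :=
    (Real.smoothTransition.contDiff (n := 1)).continuous_deriv le_rfl
  have hs : HasCompactSupport (deriv Real.smoothTransition) := by
    refine HasCompactSupport.intro (isCompact_Icc (a := (0 : ℝ)) (b := 1)) fun x hx ↦ ?_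
    rw [mem_Icc, not_and_or, not_le, not_le] at hx
    rcases hx with hx | hx
    · have : Real.smoothTransition =ᶠ[nhds x] fun _ ↦ 0 := by
        filter_upwards [Iio_mem_nhds hx] with y hy
        exact Real.smoothTransition.zero_of_nonpos (le_of_lt hy)
      simp [this.deriv_eq]
    · have : Real.smoothTransition =ᶠ[nhds x] fun _ ↦ 1 := by
        filter_upwards [Ioi_mem_nhds hx] with y hy
        exact Real.smoothTransition.one_of_one_le (le_of_lt hy)
      simp [this.deriv_eq]
  exact hc.bounded_above_of_compact_support hs

lemma summable_stepSeries (q : ℕ → ℝ) (x : ℝ) :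
    Summable fun n ↦ (1 / 10 : ℝ) ^ n * Real.smoothTransition (4 * 2 ^ n * (x - q n)) :=
  (summable_geometric_of_lt_one (by norm_num) (by norm_num)).of_nonneg_of_le
    (fun n ↦ mul_nonneg (by positivity) (Real.smoothTransition.nonneg _))
    fun n ↦ mul_le_of_le_one_right (by positivity) (Real.smoothTransition.le_one _)

lemma contDiff_stepSeries (q : ℕ → ℝ) : ContDiff ℝ 1 (stepSeries q) := by
  obtain ⟨M, hM⟩ := exists_abs_deriv_smoothTransition_le
  have hψ : ContDiff ℝ 1 Real.smoothTransition := Real.smoothTransition.contDiff (n := 1)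
  have hsum : Summable fun n ↦ (1 / 5 : ℝ) ^ n * (4 * M) :=
    (summable_geometric_of_lt_one (by norm_num) (by norm_num)).mul_right _
  set g' : ℕ → ℝ → ℝ := fun n x ↦
    (1 / 10 : ℝ) ^ n * (deriv Real.smoothTransition (4 * 2 ^ n * (x - q n)) * (4 * 2 ^ n))
  have hg' : ∀ n x, ‖g' n x‖ ≤ (1 / 5 : ℝ) ^ n * (4 * M) := by
    intro n x
    have hpow : (1 / 10 : ℝ) ^ n * 2 ^ n = (1 / 5) ^ n := by rw [← mul_pow]; norm_num
    calc ‖g' n x‖ = (1 / 10 : ℝ) ^ n * 2 ^ n *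
          (4 * |deriv Real.smoothTransition (4 * 2 ^ n * (x - q n))|) := by
          simp only [g', norm_mul, Real.norm_eq_abs, abs_pow]
          norm_num
          ring
      _ ≤ _ := by rw [hpow]; gcongr; exact hM _
  have hderiv : ∀ x, HasDerivAt (stepSeries q) (∑' n, g' n x) x := by
    refine hasDerivAt_tsum hsum (fun n x ↦ ?_) hg' (summable_stepSeries q 0)
    have hlin : HasDerivAt (fun y ↦ 4 * 2 ^ n * (y - q n)) (4 * 2 ^ n) x := by
      simpa using ((hasDerivAt_id x).sub_const (q n)).const_mul (4 * 2 ^ n : ℝ)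
    exact (((hψ.differentiable one_ne_zero _).hasDerivAt).comp x hlin).const_mul _
  refine contDiff_one_iff_deriv.2 ⟨fun x ↦ (hderiv x).differentiableAt, ?_⟩
  rw [funext fun x ↦ (hderiv x).deriv]
  refine continuous_tsum (fun n ↦ ?_) hsum hg'
  have := hψ.continuous_deriv le_rfl
  fun_prop

lemma smoothTransition_eq_zero_or_one_of_mem_flatSet {q : ℕ → ℝ} {x : ℝ} (hx : x ∈ flatSet q)
    (n : ℕ) :
    (x ≤ q n ∧ Real.smoothTransition (4 * 2 ^ n * (x - q n)) = 0) ∨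
      (q n < x ∧ Real.smoothTransition (4 * 2 ^ n * (x - q n)) = 1) := by
  rcases le_or_gt x (q n) with h | h
  · exact Or.inl ⟨h, Real.smoothTransition.zero_of_nonpos
      (mul_nonpos_of_nonneg_of_nonpos (by positivity) (by linarith))⟩
  · refine Or.inr ⟨h, Real.smoothTransition.one_of_one_le ?_⟩
    have hle : q n + (1 / 2) ^ n / 4 ≤ x := by
      by_contra! hlt
      exact hx.2 (mem_iUnion.2 ⟨n, h, hlt⟩)
    calc (1 : ℝ) = 4 * 2 ^ n * ((1 / 2) ^ n / 4) := by
          rw [one_div, inv_pow]; field_simp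
      _ ≤ _ := by gcongr; linarith

/-- A nonzero decimal expansion with digits `0` and `1` is comparable to its leading term. -/
lemma exists_pow_le_tsum_le {d : ℕ → ℝ} (hd : ∀ n, d n = 0 ∨ d n = 1) (h1 : ∃ n, d n = 1) :
    ∃ n, (1 / 10 : ℝ) ^ n ≤ ∑' k, (1 / 10 : ℝ) ^ k * d k ∧
      ∑' k, (1 / 10 : ℝ) ^ k * d k ≤ 10 / 9 * (1 / 10) ^ n := by
  classical
  have hd0 : ∀ n, 0 ≤ d n := fun n ↦ by rcases hd n with h | h <;> simp [h]
  have hd1 : ∀ n, d n ≤ 1 := fun n ↦ by rcases hd n with h | h <;> simp [h]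
  have hgeom : Summable fun k ↦ (1 / 10 : ℝ) ^ k :=
    summable_geometric_of_lt_one (by norm_num) (by norm_num)
  have hs : Summable fun k ↦ (1 / 10 : ℝ) ^ k * d k :=
    hgeom.of_nonneg_of_le (fun n ↦ mul_nonneg (by positivity) (hd0 n))
      fun n ↦ mul_le_of_le_one_right (by positivity) (hd1 n)
  refine ⟨Nat.find h1, ?_, ?_⟩
  · have := hs.le_tsum (Nat.find h1) fun k _ ↦ mul_nonneg (by positivity) (hd0 k)
    simpa [Nat.find_spec h1] using this
  · rw [← hs.sum_add_tsum_nat_add (Nat.find h1), Finset.sum_eq_zero, zero_add]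
    · calc ∑' k, (1 / 10 : ℝ) ^ (k + Nat.find h1) * d (k + Nat.find h1)
          ≤ ∑' k, (1 / 10 : ℝ) ^ k * (1 / 10) ^ Nat.find h1 := by
            refine ((summable_nat_add_iff _).2 hs).tsum_le_tsum (fun k ↦ ?_) (hgeom.mul_right _)
            rw [← pow_add]
            exact mul_le_of_le_one_right (by positivity) (hd1 _)
        _ = 10 / 9 * (1 / 10) ^ Nat.find h1 := by
            rw [tsum_mul_right, tsum_geometric_of_lt_one (by norm_num) (by norm_num)]
            norm_num
    · intro k hk
      rw [(hd k).resolve_right (Nat.find_min h1 (Finset.mem_range.1 hk)), mul_zero]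

lemma exists_pow_le_stepSeries_sub_le {q : ℕ → ℝ} (hq : DenseRange q) {x y : ℝ}
    (hx : x ∈ flatSet q) (hy : y ∈ flatSet q) (hxy : x < y) :
    ∃ n, (1 / 10 : ℝ) ^ n ≤ stepSeries q y - stepSeries q x ∧
      stepSeries q y - stepSeries q x ≤ 10 / 9 * (1 / 10) ^ n := by
  have hsub : stepSeries q y - stepSeries q x = ∑' n, (1 / 10 : ℝ) ^ n *
      (Real.smoothTransition (4 * 2 ^ n * (y - q n)) -
        Real.smoothTransition (4 * 2 ^ n * (x - q n))) := by
    simp only [stepSeries, mul_sub (_ ^ _)]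
    exact ((summable_stepSeries q y).tsum_sub (summable_stepSeries q x)).symm
  rw [hsub]
  refine exists_pow_le_tsum_le (fun n ↦ ?_) ?_
  · rcases smoothTransition_eq_zero_or_one_of_mem_flatSet hx n with ⟨h, hx⟩ | ⟨h, hx⟩ <;>
      rcases smoothTransition_eq_zero_or_one_of_mem_flatSet hy n with ⟨h', hy⟩ | ⟨h', hy⟩
    · simp [hx, hy]
    · simp [hx, hy]
    · linarith
    · simp [hx, hy]
  · obtain ⟨n, hxn, hny⟩ := hq.exists_mem_open isOpen_Ioo (nonempty_Ioo.2 hxy)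
    refine ⟨n, ?_⟩
    rcases smoothTransition_eq_zero_or_one_of_mem_flatSet hx n with ⟨h, hx⟩ | ⟨h, hx⟩
    · rcases smoothTransition_eq_zero_or_one_of_mem_flatSet hy n with ⟨h', hy⟩ | ⟨h', hy⟩
      · linarith
      · simp [hx, hy]
    · linarith

lemma ne_two_mul_of_pow_le {a b : ℝ}
    (ha : ∃ n : ℕ, (1 / 10 : ℝ) ^ n ≤ a ∧ a ≤ 10 / 9 * (1 / 10) ^ n)
    (hb : ∃ n : ℕ, (1 / 10 : ℝ) ^ n ≤ b ∧ b ≤ 10 / 9 * (1 / 10) ^ n) : a ≠ 2 * b := by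
  obtain ⟨n, hn, hn'⟩ := ha
  obtain ⟨m, hm, hm'⟩ := hb
  have hdecay : ∀ {i j : ℕ}, i < j → (1 / 10 : ℝ) ^ j ≤ 1 / 10 * (1 / 10) ^ i := fun h ↦ by
    rw [← pow_succ']
    exact pow_le_pow_of_le_one (by norm_num) (by norm_num) h
  have hnpos : 0 < (1 / 10 : ℝ) ^ n := by positivity
  have hmpos : 0 < (1 / 10 : ℝ) ^ m := by positivity
  rcases lt_trichotomy n m with h | rfl | h
  · linarith [hdecay h]
  · linarith
  · linarith [hdecay h]

lemma eq_of_stepSeries_add_two_mul_eq {q : ℕ → ℝ} (hq : DenseRange q) {x y x' y' : ℝ}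
    (hx : x ∈ flatSet q) (hy : y ∈ flatSet q) (hx' : x' ∈ flatSet q) (hy' : y' ∈ flatSet q)
    (h : stepSeries q x + 2 * stepSeries q y = stepSeries q x' + 2 * stepSeries q y') :
    x = x' ∧ y = y' := by
  have hmono : ∀ {s t}, s ∈ flatSet q → t ∈ flatSet q → s < t →
      stepSeries q s < stepSeries q t := fun hs ht hst ↦ by
    obtain ⟨n, hn, -⟩ := exists_pow_le_stepSeries_sub_le hq hs ht hst
    linarith [show 0 < (1 / 10 : ℝ) ^ n by positivity]
  rcases lt_trichotomy x x' with hxx | rfl | hxx <;> rcases lt_trichotomy y y' with hyy | rfl | hyy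
  · linarith [hmono hx hx' hxx, hmono hy hy' hyy]
  · linarith [hmono hx hx' hxx]
  · exact absurd (by linarith) (ne_two_mul_of_pow_le
      (exists_pow_le_stepSeries_sub_le hq hx hx' hxx)
      (exists_pow_le_stepSeries_sub_le hq hy' hy hyy))
  · linarith [hmono hy hy' hyy]
  · exact ⟨rfl, rfl⟩
  · linarith [hmono hy' hy hyy]
  · exact absurd (by linarith) (ne_two_mul_of_pow_le
      (exists_pow_le_stepSeries_sub_le hq hx' hx hxx)
      (exists_pow_le_stepSeries_sub_le hq hy hy' hyy))
  · linarith [hmono hx' hx hxx]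
  · linarith [hmono hx' hx hxx, hmono hy' hy hyy]

lemma measurableSet_flatSet (q : ℕ → ℝ) : MeasurableSet (flatSet q) :=
  measurableSet_Icc.diff (MeasurableSet.iUnion fun _ ↦ measurableSet_Ioo)

lemma volume_flatSet_pos (q : ℕ → ℝ) : 0 < volume (flatSet q) := by
  have hU : volume (⋃ n, Ioo (q n) (q n + (1 / 2) ^ n / 4)) ≤ ENNReal.ofReal (1 / 2) := by
    refine (measure_iUnion_le _).trans (le_of_eq ?_)
    simp only [Real.volume_Ioo, add_sub_cancel_left]
    rw [← ENNReal.ofReal_tsum_of_nonneg (fun n ↦ by positivity)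
      (summable_geometric_two.div_const 4), tsum_div_const, tsum_geometric_two]
    norm_num
  have hlt : volume (⋃ n, Ioo (q n) (q n + (1 / 2) ^ n / 4)) < volume (Icc (0 : ℝ) 1) := by
    refine hU.trans_lt ?_
    rw [Real.volume_Icc, ENNReal.ofReal_lt_ofReal_iff] <;> norm_num
  exact (tsub_pos_of_lt hlt).trans_le le_measure_sdiff

theorem exists_C1_injective_on_positive_measure_set :
    ∃ κ : EuclideanSpace ℝ (Fin 2) → ℝ, ContDiff ℝ 1 κ ∧
      ∃ A : Set (EuclideanSpace ℝ (Fin 2)), IsBounded A ∧ MeasurableSet A ∧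
        0 < volume A ∧ volume A < ⊤ ∧ Set.InjOn κ A := by
  obtain ⟨q, hq⟩ := TopologicalSpace.exists_dense_seq ℝ
  have hu := contDiff_stepSeries q
  set B : Set (Fin 2 → ℝ) := univ.pi fun _ ↦ flatSet q
  have hB : MeasurableSet B := MeasurableSet.univ_pi fun _ ↦ measurableSet_flatSet q
  have hpres := PiLp.volume_preserving_ofLp (Fin 2)
  have hbdd : IsBounded (WithLp.ofLp ⁻¹' B : Set (EuclideanSpace ℝ (Fin 2))) :=
    (PiLp.antilipschitzWith_ofLp 2 _).isBounded_preimage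
      (IsBounded.pi fun _ ↦ (isBounded_Icc 0 1).subset sdiff_subset)
  refine ⟨fun p ↦ stepSeries q (p 0) + 2 * stepSeries q (p 1), by fun_prop,
    WithLp.ofLp ⁻¹' B, hbdd, hpres.measurable hB, ?_, hbdd.measure_lt_top, ?_⟩
  · rw [hpres.measure_preimage hB.nullMeasurableSet, volume_pi_pi]
    exact CanonicallyOrderedAdd.prod_pos.2 fun _ _ ↦ volume_flatSet_pos q
  · intro p hp p' hp' h
    obtain ⟨h0, h1⟩ := eq_of_stepSeries_add_two_mul_eq hq (hp 0 trivial) (hp 1 trivial)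
      (hp' 0 trivial) (hp' 1 trivial) h
    ext i
    fin_cases i
    · exact h0
    · exact h1
end
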